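/- Let c > 0 and λ > 0, and define for real s and t the function p(s,t) = (e^{−λt}/(2c)) [ λ Σ_{n=0}^∞ ((λ/(2c))² (c²t² − s²))ⁿ / (n!)² + (λ² t / 2) Σ_{n=0}^∞ (λ/(2c))^{2n} (c²t² − s²)ⁿ / (n! (n+1)!) ]. Then at every point (s,t) with t > 0 and |s| < c t, the function p satisfies the telegraph equation c² ∂²p/∂s² = ∂²p/∂t² + 2λ ∂p/∂t. -/

import Mathlib

/-- The absolutely continuous part of the distribution of the Goldstein–Kac telegraph
process with speed `c` and switching rate `lam`. -/
noncomputable def telegraphDensity (c lam : ℝ) (s t : ℝ) : ℝ :=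
  (Real.exp (-(lam * t)) / (2 * c)) *
    (lam * ∑' n : ℕ, ((lam / (2 * c)) ^ 2 * (c ^ 2 * t ^ 2 - s ^ 2)) ^ n /
        ((n.factorial : ℝ)) ^ 2 +
      (lam ^ 2 * t / 2) * ∑' n : ℕ, (lam / (2 * c)) ^ (2 * n) * (c ^ 2 * t ^ 2 - s ^ 2) ^ n /
        ((n.factorial : ℝ) * ((n + 1).factorial : ℝ)))

/-!
Write `C_k(x) = ∑ xⁿ / (n! (n + k)!)`, so that `C_k' = C_{k+1}` and
`C_k = (k + 1) C_{k+1} + x C_{k+2}`. With `z = (λ / 2c)² (c² t² - s²)`, these two identities show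
that `C₀(z)` and `t C₁(z)` (a multiple of the time derivative of `C₀(z)`) solve the Klein–Gordon
equation `c² u_ss = u_tt - λ² u`. The substitution `p = e^{-λt} u` turns that equation into the
telegraph equation, and the density is `e^{-λt}` times a linear combination of the two solutions.
-/

open Nat (factorial)

section BesselClifford

variable {𝕜 : Type*} [RCLike 𝕜]

/-- The Bessel–Clifford function of order `k`, normalised so that the modified Bessel function is
`I_k(z) = (z / 2) ^ k * besselClifford k (z ^ 2 / 4)`. Unlike `I_k` it is entire in the squared
variable, so no square root of `c² t² - s²` is needed. -/
noncomputable def besselClifford (k : ℕ) (x : 𝕜) : 𝕜 :=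
  ∑' n : ℕ, x ^ n / ((factorial n : 𝕜) * (factorial (n + k) : 𝕜))

theorem norm_besselClifford_term_le (k n : ℕ) {x : 𝕜} {R : ℝ} (hx : ‖x‖ ≤ R) :
    ‖x ^ n / ((factorial n : 𝕜) * (factorial (n + k) : 𝕜))‖ ≤ R ^ n / factorial n := by
  have one_le_factorial : (1 : ℝ) ≤ factorial (n + k) := by
    exact_mod_cast Nat.one_le_iff_ne_zero.2 (Nat.factorial_ne_zero _)
  rw [norm_div, norm_mul, norm_pow, RCLike.norm_natCast, RCLike.norm_natCast]
  have R_nonneg : 0 ≤ R := (norm_nonneg x).trans hx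
  gcongr
  exact le_mul_of_one_le_right (by positivity) one_le_factorial

theorem summable_besselClifford_term (k : ℕ) (x : 𝕜) :
    Summable fun n : ℕ => x ^ n / ((factorial n : 𝕜) * (factorial (n + k) : 𝕜)) :=
  .of_norm_bounded (Real.summable_pow_div_factorial ‖x‖)
    fun n => norm_besselClifford_term_le k n le_rfl

theorem besselClifford_eq_add_tsum_succ (k : ℕ) (x : 𝕜) :
    besselClifford k x = 1 / (factorial k : 𝕜) +
      ∑' n : ℕ, x ^ (n + 1) / ((factorial (n + 1) : 𝕜) * (factorial (n + 1 + k) : 𝕜)) := by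
  simp [besselClifford, (summable_besselClifford_term k x).tsum_eq_zero_add]

theorem hasDerivAt_besselClifford_term_succ (k n : ℕ) (x : 𝕜) :
    HasDerivAt
      (fun y : 𝕜 => y ^ (n + 1) / ((factorial (n + 1) : 𝕜) * (factorial (n + 1 + k) : 𝕜)))
      (x ^ n / ((factorial n : 𝕜) * (factorial (n + (k + 1)) : 𝕜))) x := by
  refine ((hasDerivAt_pow (n + 1) x).div_const _).congr_deriv ?_
  have succ_ne_zero : (n : 𝕜) + 1 ≠ 0 := n.cast_add_one_ne_zero
  rw [Nat.factorial_succ n, Nat.add_sub_cancel, show n + 1 + k = n + (k + 1) by ring]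
  push_cast
  field_simp

theorem hasDerivAt_besselClifford (k : ℕ) (x : 𝕜) :
    HasDerivAt (besselClifford k) (besselClifford (k + 1) x) x := by
  let ball := Metric.ball (0 : 𝕜) (‖x‖ + 1)
  have x_mem_ball : x ∈ ball := mem_ball_zero_iff.2 (lt_add_one ‖x‖)
  have isPreconnected_ball : IsPreconnected ball := (convex_ball 0 (‖x‖ + 1)).isPreconnected
  have summable_tail := (summable_nat_add_iff 1).2 (summable_besselClifford_term k x)
  have norm_deriv_le (n : ℕ) (y : 𝕜) (hy : y ∈ ball) :
      ‖y ^ n / ((factorial n : 𝕜) * (factorial (n + (k + 1)) : 𝕜))‖ ≤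
        (‖x‖ + 1) ^ n / factorial n :=
    norm_besselClifford_term_le (k + 1) n (mem_ball_zero_iff.1 hy).le
  have hasDerivAt_tail := hasDerivAt_tsum_of_isPreconnected
    (Real.summable_pow_div_factorial (‖x‖ + 1)) Metric.isOpen_ball isPreconnected_ball
    (fun n y _ => hasDerivAt_besselClifford_term_succ k n y) norm_deriv_le
    x_mem_ball summable_tail x_mem_ball
  rw [funext (besselClifford_eq_add_tsum_succ (𝕜 := 𝕜) k)]
  exact hasDerivAt_tail.const_add _

theorem deriv_besselClifford (k : ℕ) :
    deriv (besselClifford (𝕜 := 𝕜) k) = besselClifford (k + 1) :=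
  funext fun x => (hasDerivAt_besselClifford k x).deriv

theorem iteratedDeriv_besselClifford (k n : ℕ) :
    iteratedDeriv n (besselClifford (𝕜 := 𝕜) k) = besselClifford (k + n) := by
  induction n with
  | zero => exact iteratedDeriv_zero
  | succ n ih => rw [iteratedDeriv_succ, ih, deriv_besselClifford, add_assoc]

theorem contDiff_besselClifford (k : ℕ) {n : ℕ∞} : ContDiff 𝕜 n (besselClifford (𝕜 := 𝕜) k) :=
  contDiff_of_differentiable_iteratedDeriv fun m _ => by
    rw [iteratedDeriv_besselClifford]
    exact fun x => (hasDerivAt_besselClifford (k + m) x).differentiableAt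

theorem besselClifford_recurrence (k : ℕ) (x : 𝕜) :
    besselClifford k x = (k + 1) * besselClifford (k + 1) x + x * besselClifford (k + 2) x := by
  have tail_term (n : ℕ) :
      x ^ (n + 1) / ((factorial (n + 1) : 𝕜) * (factorial (n + 1 + k) : 𝕜)) =
        (k + 1) * (x ^ (n + 1) / ((factorial (n + 1) : 𝕜) * (factorial (n + 1 + (k + 1)) : 𝕜))) +
          x * (x ^ n / ((factorial n : 𝕜) * (factorial (n + (k + 2)) : 𝕜))) := by
    have succ_ne_zero : (n : 𝕜) + 1 ≠ 0 := n.cast_add_one_ne_zero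
    have add_two_ne_zero : (n : 𝕜) + 1 + k + 1 ≠ 0 := mod_cast (n + 1 + k).succ_ne_zero
    rw [show n + (k + 2) = n + 1 + k + 1 by ring, ← Nat.add_assoc, Nat.factorial_succ n,
      Nat.factorial_succ (n + 1 + k)]
    push_cast
    field_simp
    ring
  have head_term : 1 / (factorial k : 𝕜) = (k + 1) * (1 / (factorial (k + 1) : 𝕜)) := by
    have succ_ne_zero : (k : 𝕜) + 1 ≠ 0 := k.cast_add_one_ne_zero
    rw [Nat.factorial_succ]
    push_cast
    field_simp
  have summable_tail := (summable_nat_add_iff 1).2 (summable_besselClifford_term (k + 1) x)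
  rw [besselClifford_eq_add_tsum_succ k, besselClifford_eq_add_tsum_succ (k + 1),
    tsum_congr tail_term, (summable_tail.mul_left _).tsum_add
      ((summable_besselClifford_term (k + 2) x).mul_left _),
    tsum_mul_left, tsum_mul_left, head_term, mul_add, add_assoc, ← besselClifford]

theorem hasDerivAt_besselClifford_quadratic (k : ℕ) (a b r : 𝕜) :
    HasDerivAt (fun r => besselClifford k (a * r ^ 2 + b))
      (2 * a * r * besselClifford (k + 1) (a * r ^ 2 + b)) r := by
  have quadratic : HasDerivAt (fun r => a * r ^ 2 + b) (2 * a * r) r :=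
    (((hasDerivAt_pow 2 r).const_mul a).add_const b).congr_deriv (by push_cast; ring)
  exact ((hasDerivAt_besselClifford k _).comp r quadratic).congr_deriv (mul_comm _ _)

theorem iteratedDeriv_two_besselClifford_quadratic (k : ℕ) (a b r : 𝕜) :
    iteratedDeriv 2 (fun r => besselClifford k (a * r ^ 2 + b)) r =
      2 * a * besselClifford (k + 1) (a * r ^ 2 + b) +
        (2 * a * r) ^ 2 * besselClifford (k + 2) (a * r ^ 2 + b) := by
  have deriv_eq : deriv (fun r => besselClifford k (a * r ^ 2 + b)) =
      fun r => 2 * a * r * besselClifford (k + 1) (a * r ^ 2 + b) :=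
    funext fun r => (hasDerivAt_besselClifford_quadratic k a b r).deriv
  rw [iteratedDeriv_succ, iteratedDeriv_one, deriv_eq]
  refine (((hasDerivAt_id r).const_mul (2 * a)).mul
    (hasDerivAt_besselClifford_quadratic (k + 1) a b r)).deriv.trans ?_
  simp only [id]
  ring

theorem besselClifford_wave_equation (k : ℕ) (b c s t : 𝕜) :
    c ^ 2 * iteratedDeriv 2 (fun s' => besselClifford k (b * (c ^ 2 * t ^ 2 - s' ^ 2))) s =
      iteratedDeriv 2 (fun t' => besselClifford k (b * (c ^ 2 * t' ^ 2 - s ^ 2))) t -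
        4 * b * c ^ 2 * (besselClifford k (b * (c ^ 2 * t ^ 2 - s ^ 2)) -
          k * besselClifford (k + 1) (b * (c ^ 2 * t ^ 2 - s ^ 2))) := by
  have space_quadratic (s : 𝕜) :
      b * (c ^ 2 * t ^ 2 - s ^ 2) = -b * s ^ 2 + b * c ^ 2 * t ^ 2 := by ring
  have time_quadratic (t : 𝕜) :
      b * (c ^ 2 * t ^ 2 - s ^ 2) = b * c ^ 2 * t ^ 2 + -b * s ^ 2 := by ring
  have space_deriv := iteratedDeriv_two_besselClifford_quadratic k (-b) (b * c ^ 2 * t ^ 2) s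
  have time_deriv := iteratedDeriv_two_besselClifford_quadratic k (b * c ^ 2) (-b * s ^ 2) t
  simp only [← space_quadratic] at space_deriv
  simp only [← time_quadratic] at time_deriv
  rw [space_deriv, time_deriv]
  linear_combination 4 * b * c ^ 2 * besselClifford_recurrence k (b * (c ^ 2 * t ^ 2 - s ^ 2))

end BesselClifford

theorem iteratedDeriv_two_fun_mul {𝕜 : Type*} [NontriviallyNormedField 𝕜] {f g : 𝕜 → 𝕜} {x : 𝕜}
    (hf : ContDiffAt 𝕜 2 f x) (hg : ContDiffAt 𝕜 2 g x) :
    iteratedDeriv 2 (fun y => f y * g y) x =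
      iteratedDeriv 2 f x * g x + 2 * (deriv f x * deriv g x) + f x * iteratedDeriv 2 g x := by
  rw [iteratedDeriv_fun_mul hf hg]
  simp only [Nat.reduceAdd, Finset.sum_range_succ, Finset.range_one, Finset.sum_singleton,
    Nat.choose_zero_right, Nat.cast_one, iteratedDeriv_zero, one_mul, tsub_zero,
    Nat.choose_succ_self_right, Nat.cast_ofNat, iteratedDeriv_one, Nat.add_one_sub_one,
    Nat.choose_self, tsub_self]
  ring

/-- `u s t` is a classical solution on the whole plane of the Klein–Gordon equation
`c² u_ss = u_tt - μ u`, with `s` the space and `t` the time variable.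
The parameter `μ` is the squared mass, and `C²` regularity is asked of `u` in each variable
separately. -/
structure IsKleinGordonSolution (c μ : ℝ) (u : ℝ → ℝ → ℝ) : Prop where
  contDiff_space : ∀ t, ContDiff ℝ 2 fun s => u s t
  contDiff_time : ∀ s, ContDiff ℝ 2 (u s)
  equation : ∀ s t,
    c ^ 2 * iteratedDeriv 2 (fun s' => u s' t) s = iteratedDeriv 2 (u s) t - μ * u s t

namespace IsKleinGordonSolution

variable {c μ : ℝ} {u v : ℝ → ℝ → ℝ}

theorem add (hu : IsKleinGordonSolution c μ u) (hv : IsKleinGordonSolution c μ v) :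
    IsKleinGordonSolution c μ fun s t => u s t + v s t where
  contDiff_space t := (hu.contDiff_space t).add (hv.contDiff_space t)
  contDiff_time s := (hu.contDiff_time s).add (hv.contDiff_time s)
  equation s t := by
    rw [iteratedDeriv_fun_add (hu.contDiff_space t).contDiffAt (hv.contDiff_space t).contDiffAt,
      iteratedDeriv_fun_add (hu.contDiff_time s).contDiffAt (hv.contDiff_time s).contDiffAt]
    linear_combination hu.equation s t + hv.equation s t

theorem const_mul (hu : IsKleinGordonSolution c μ u) (a : ℝ) :
    IsKleinGordonSolution c μ fun s t => a * u s t where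
  contDiff_space t := contDiff_const.mul (hu.contDiff_space t)
  contDiff_time s := contDiff_const.mul (hu.contDiff_time s)
  equation s t := by
    rw [iteratedDeriv_const_mul_field, iteratedDeriv_const_mul_field]
    linear_combination a * hu.equation s t

theorem telegraph_exp_mul {lam : ℝ} (hu : IsKleinGordonSolution c (lam ^ 2) u) (s t : ℝ) :
    c ^ 2 * iteratedDeriv 2 (fun s' => Real.exp (-(lam * t)) * u s' t) s =
      iteratedDeriv 2 (fun t' => Real.exp (-(lam * t')) * u s t') t +
        2 * lam * deriv (fun t' => Real.exp (-(lam * t')) * u s t') t := by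
  have iteratedDeriv_exp (n : ℕ) : iteratedDeriv n (fun t' => Real.exp (-(lam * t'))) t =
      (-lam) ^ n * Real.exp (-(lam * t)) := by
    simpa only [neg_mul] using congrFun (iteratedDeriv_exp_const_mul n (-lam)) t
  have hu_time : ContDiffAt ℝ 2 (u s) t := (hu.contDiff_time s).contDiffAt
  rw [iteratedDeriv_const_mul_field, iteratedDeriv_two_fun_mul (by fun_prop) hu_time,
    deriv_fun_mul (by fun_prop) (hu_time.differentiableAt two_ne_zero), ← iteratedDeriv_one,
    iteratedDeriv_exp, iteratedDeriv_exp]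
  linear_combination Real.exp (-(lam * t)) * hu.equation s t

end IsKleinGordonSolution

theorem isKleinGordonSolution_besselClifford_zero (b c : ℝ) :
    IsKleinGordonSolution c (4 * b * c ^ 2)
      fun s t => besselClifford 0 (b * (c ^ 2 * t ^ 2 - s ^ 2)) where
  contDiff_space _ := (contDiff_besselClifford 0 (n := 2)).comp (by fun_prop)
  contDiff_time _ := (contDiff_besselClifford 0 (n := 2)).comp (by fun_prop)
  equation s t := by simpa using besselClifford_wave_equation 0 b c s t

theorem isKleinGordonSolution_mul_besselClifford_one (b c : ℝ) :
    IsKleinGordonSolution c (4 * b * c ^ 2)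
      fun s t => t * besselClifford 1 (b * (c ^ 2 * t ^ 2 - s ^ 2)) where
  contDiff_space _ := contDiff_const.mul ((contDiff_besselClifford 1 (n := 2)).comp (by fun_prop))
  contDiff_time _ := contDiff_id.mul ((contDiff_besselClifford 1 (n := 2)).comp (by fun_prop))
  equation s t := by
    have time_quadratic (t : ℝ) :
        b * (c ^ 2 * t ^ 2 - s ^ 2) = b * c ^ 2 * t ^ 2 + -b * s ^ 2 := by ring
    have time_deriv := (hasDerivAt_besselClifford_quadratic 1 (b * c ^ 2) (-b * s ^ 2) t).deriv
    simp only [← time_quadratic] at time_deriv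
    have contDiff_time : ContDiff ℝ 2 fun t =>
        besselClifford 1 (b * (c ^ 2 * t ^ 2 - s ^ 2)) :=
      (contDiff_besselClifford 1 (n := 2)).comp (by fun_prop)
    rw [iteratedDeriv_const_mul_field, iteratedDeriv_two_fun_mul contDiffAt_fun_id
      contDiff_time.contDiffAt, time_deriv]
    simp only [iteratedDeriv_fun_id, deriv_id'', OfNat.ofNat_ne_zero, OfNat.ofNat_ne_one, if_false]
    linear_combination t * besselClifford_wave_equation 1 b c s t

theorem telegraphDensity_eq_exp_mul (c lam s t : ℝ) :
    telegraphDensity c lam s t = Real.exp (-(lam * t)) *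
      (lam / (2 * c) * besselClifford 0 ((lam / (2 * c)) ^ 2 * (c ^ 2 * t ^ 2 - s ^ 2)) +
        lam ^ 2 / (4 * c) *
          (t * besselClifford 1 ((lam / (2 * c)) ^ 2 * (c ^ 2 * t ^ 2 - s ^ 2)))) := by
  simp only [telegraphDensity, besselClifford, mul_pow, pow_mul, add_zero,
    sq (factorial _ : ℝ)]
  ring

theorem telegraph_equation_general (c lam : ℝ) (hc : c ≠ 0) (s t : ℝ) :
    c ^ 2 * deriv (fun s' => deriv (fun s'' => telegraphDensity c lam s'' t) s') s =
      deriv (fun t' => deriv (fun t'' => telegraphDensity c lam s t'') t') t +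
        2 * lam * deriv (fun t' => telegraphDensity c lam s t') t := by
  have mass_eq : 4 * (lam / (2 * c)) ^ 2 * c ^ 2 = lam ^ 2 := by field_simp; ring
  have kleinGordon :=
    ((isKleinGordonSolution_besselClifford_zero ((lam / (2 * c)) ^ 2) c).const_mul
      (lam / (2 * c))).add
    ((isKleinGordonSolution_mul_besselClifford_one ((lam / (2 * c)) ^ 2) c).const_mul
      (lam ^ 2 / (4 * c)))
  rw [mass_eq] at kleinGordon
  simpa only [telegraphDensity_eq_exp_mul, iteratedDeriv_succ, iteratedDeriv_zero] using
    kleinGordon.telegraph_exp_mul s t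

theorem telegraph_equation (c lam : ℝ) (hc : 0 < c) (hlam : 0 < lam) (s t : ℝ)
    (ht : 0 < t) (hst : |s| < c * t) :
    c ^ 2 * deriv (fun s' => deriv (fun s'' => telegraphDensity c lam s'' t) s') s =
      deriv (fun t' => deriv (fun t'' => telegraphDensity c lam s t'') t') t +
        2 * lam * deriv (fun t' => telegraphDensity c lam s t') t :=
  telegraph_equation_general c lam hc.ne' s t
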